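/- Uniform bounds on multiplier, action and energy along Floer trajectories of a homotopy (Proposition 3.3): Let 𝖧 be admissible, K a nonempty compact set, and let Γ={(H_s,J_s)}_{s∈ℝ} be a smooth homotopy, constant in s outside [0,1], with H_s∈𝖧+𝒪(𝖧) for all s and each J_s a 2-parameter family of ω₀-compatible almost complex structures with ‖J‖∞<∞. Let ε₀>0 and c̃>0 be constants such that for every H∈𝖧+𝒪(𝖧), ‖∇𝒜^H(v,η)‖<ε₀ implies |η|≤c̃(|𝒜^H(v,η)|+1), and assume (c̃+‖J‖∞^{3/2}/ε₀)·‖∂_sH_s‖∞<1/8. Let u(s)=(v(s,·),η(s)) be a Floer trajectory of Γ with lim_{s→−∞}𝒜^{H₀}(u(s))≥a and lim_{s→+∞}𝒜^{H₁}(u(s))≤b. Then: sup_{s∈ℝ}|η(s)|≤𝔶:=(8/7)(c̃(max{|a|,|b|}+1)+((b−a)/ε₀)‖J‖∞^{3/2}); sup_{s∈ℝ}|𝒜^{H_s}(u(s))|≤𝔞:=(1/7)(8·max{|a|,|b|}+1+|b−a|); and the energy ∫_ℝ(‖∂_sv(s)‖²_{L²(S¹)}+|∂_sη(s)|²)ds≤𝔢:=(1/7)‖J‖∞(8|b−a|+max{|a|,|b|}+1).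 In particular the bounds depend only on a,b, the common admissibility parameters of the family, and continuously on ‖J‖∞. -/

import Mathlib

open MeasureTheory intervalIntegral Set
open scoped RealInnerProductSpace Topology

noncomputable section

/-- Phase space `ℝ^{2n}`, realized as `ℂ^n` with its real inner product. -/
abbrev E (n : ℕ) := EuclideanSpace ℂ (Fin n)

/-- The standard linear complex structure `J₀` (multiplication by `i`). -/
def J0 {n : ℕ} (x : E n) : E n := Complex.I • x

/-- The standard symplectic form `ω₀(u,w) = ⟨J₀u, w⟩`. -/
def om {n : ℕ} (u w : E n) : ℝ := @inner ℝ _ _ (J0 u) w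

/-- The Hamiltonian vector field `X^H = J₀ ∇H`. -/
def XH {n : ℕ} (H : E n → ℝ) (x : E n) : E n := J0 (gradient H x)

/-- A loop: a smooth 1-periodic map `ℝ → ℝ^{2n}`. -/
def IsLoop {n : ℕ} (v : ℝ → E n) : Prop := ContDiff ℝ (⊤ : ℕ∞) v ∧ ∀ t, v (t + 1) = v t

/-- The `L²` norm on loops. -/
def L2 {n : ℕ} (v : ℝ → E n) : ℝ := Real.sqrt (∫ t in (0:ℝ)..1, ‖v t‖ ^ 2)

/-- The Rabinowitz action functional. -/
def RabAction {n : ℕ} (H : E n → ℝ) (v : ℝ → E n) (η : ℝ) : ℝ :=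
  (∫ t in (0:ℝ)..1, (1 / 2) * om (v t) (deriv v t)) - η * ∫ t in (0:ℝ)..1, H (v t)

/-- The norm `‖∇𝒜^H(v,η)‖ = ‖∂_t v − η X^H(v)‖_{L²} + |∫₀¹ H(v)|` of the `L²` gradient. -/
def gradNorm {n : ℕ} (H : E n → ℝ) (v : ℝ → E n) (η : ℝ) : ℝ :=
  L2 (fun t => deriv v t - η • XH H (v t)) + |∫ t in (0:ℝ)..1, H (v t)|

/-- A Liouville vector field on a set `U`. -/
def IsLiouvilleOn {n : ℕ} (X : E n → E n) (U : Set (E n)) : Prop :=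
  ∀ x ∈ U, ∀ u w : E n, om (fderiv ℝ X x u) w + om u (fderiv ℝ X x w) = om u w

/-- Condition (H1). -/
def SatH1 {n : ℕ} (H : E n → ℝ) (c₁ c₂ c₃ : ℝ) : Prop :=
  ∃ X : E n → E n, ContDiff ℝ (⊤ : ℕ∞) X ∧ IsLiouvilleOn X Set.univ ∧
    (∀ x, ‖X x‖ ≤ c₁ * (‖x‖ + 1)) ∧ ∀ x, fderiv ℝ H x (X x) ≥ c₂ * ‖x‖ ^ 2 - c₃

/-- Condition (H2). -/
def SatH2 {n : ℕ} (H : E n → ℝ) (L : ℝ) : Prop :=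
  ∀ x, ‖iteratedFDeriv ℝ 3 H x‖ * ‖x‖ ≤ L

/-- Condition (H3). -/
def SatH3 {n : ℕ} (H : E n → ℝ) (c₄ c₅ ν : ℝ) : Prop :=
  ∃ X : E n → E n, IsLiouvilleOn X (H ⁻¹' Ioo (-ν) ν) ∧
    (∀ x ∈ H ⁻¹' Ioo (-ν) ν, ‖X x‖ ≤ c₄ * (‖x‖ ^ 2 + 1)) ∧
    ∀ x ∈ H ⁻¹' Ioo (-ν) ν, fderiv ℝ H x (X x) ≥ c₅

/-- Admissible Hamiltonians. -/
def Admissible {n : ℕ} (H : E n → ℝ) : Prop :=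
  ContDiff ℝ (⊤ : ℕ∞) H ∧ ∃ c₁ c₂ c₃ L c₄ c₅ ν : ℝ,
    0 < c₁ ∧ 0 < c₂ ∧ 0 ≤ c₃ ∧ 0 ≤ L ∧ 0 < c₄ ∧ 0 < c₅ ∧ 0 < ν ∧
    SatH1 H c₁ c₂ c₃ ∧ SatH2 H L ∧ SatH3 H c₄ c₅ ν

/-- Uniform bound on the Hessian. -/
def HessBound {n : ℕ} (H : E n → ℝ) (M : ℝ) : Prop :=
  ∀ x, ‖iteratedFDeriv ℝ 2 H x‖ ≤ M

/-- Linear growth of the gradient. -/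
def GradBound {n : ℕ} (H : E n → ℝ) (M h₁ : ℝ) : Prop :=
  ∀ x, ‖gradient H x‖ ≤ h₁ + M * ‖x‖

/-- `J₀` as a continuous linear map. -/
def J0L (n : ℕ) : E n →L[ℝ] E n := Complex.I • (ContinuousLinearMap.id ℝ (E n))

/-- An `ω₀`-compatible linear complex structure. -/
def CompatJ {n : ℕ} (J : E n →L[ℝ] E n) : Prop :=
  (∀ ξ, J (J ξ) = -ξ) ∧ (∀ u w, om (J u) (J w) = om u w) ∧
    ∀ ξ : E n, ξ ≠ 0 → 0 < om ξ (J ξ)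

/-- Critical points of the Rabinowitz action functional `𝒜^H`. -/
def IsCrit {n : ℕ} (H : E n → ℝ) (v : ℝ → E n) (η : ℝ) : Prop :=
  IsLoop v ∧ (∀ t, deriv v t = η • XH H (v t)) ∧ ∀ t, H (v t) = 0

/-- Condition (PO). -/
def SatPO {n : ℕ} (H : E n → ℝ) : Prop :=
  ∀ m : ℕ, ∃ Km : Set (E n), IsCompact Km ∧
    ∀ v η, IsCrit H v η → 0 < |RabAction H v η| → |RabAction H v η| ≤ m → ∀ t, v t ∈ Km

/-- Membership in `𝒞(𝒜^H, N)`. -/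
def InCritN {n : ℕ} (H : E n → ℝ) (N : Set (E n)) (v : ℝ → E n) (η : ℝ) : Prop :=
  IsCrit H v η ∧ (0 < |RabAction H v η| ∨ ((∃ p ∈ N, ∀ t, v t = p) ∧ η = 0))

/-- `W^{1,2}` distance between loops. -/
def W12dist {n : ℕ} (v w : ℝ → E n) : ℝ :=
  L2 (fun t => v t - w t) + L2 (fun t => deriv v t - deriv w t)

/-- A smooth homotopy of Hamiltonians and compatible almost complex structures,
constant outside `[0,1]`. -/
def IsHomotopy {n : ℕ} (Hs : ℝ → E n → ℝ)
    (Js : ℝ → ℝ → E n → ℝ → (E n →L[ℝ] E n)) : Prop :=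
  ContDiff ℝ (⊤ : ℕ∞) (fun p : ℝ × E n => Hs p.1 p.2) ∧
  ContDiff ℝ (⊤ : ℕ∞) (fun p : ℝ × ℝ × E n × ℝ => Js p.1 p.2.1 p.2.2.1 p.2.2.2) ∧
  (∀ s ≤ (0:ℝ), Hs s = Hs 0 ∧ Js s = Js 0) ∧
  (∀ s, (1:ℝ) ≤ s → Hs s = Hs 1 ∧ Js s = Js 1) ∧
  ∀ s t x η, CompatJ (Js s t x η)

/-- The `Cˡ` norms of the almost complex structures are uniformly bounded for every `l`. -/
def JClBounded {n : ℕ} (Js : ℝ → ℝ → E n → ℝ → (E n →L[ℝ] E n)) : Prop :=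
  ∀ l : ℕ, ∃ B : ℝ, ∀ s : ℝ, ∀ p : ℝ × E n × ℝ,
    ‖iteratedFDeriv ℝ l (fun q : ℝ × E n × ℝ => Js s q.1 q.2.1 q.2.2) p‖ ≤ B

/-- `JN` plays the role of `‖J‖_∞`: comparison between the metrics `g_{J_s}` and the flat one. -/
def JBound {n : ℕ} (Js : ℝ → ℝ → E n → ℝ → (E n →L[ℝ] E n)) (JN : ℝ) : Prop :=
  1 ≤ JN ∧ ∀ s t x η (ξ : E n),
    JN⁻¹ * ‖ξ‖ ^ 2 ≤ om ξ (Js s t x η ξ) ∧ om ξ (Js s t x η ξ) ≤ JN * ‖ξ‖ ^ 2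

/-- `D` bounds `‖∂_s H_s‖_∞`. -/
def dsHBound {n : ℕ} (Hs : ℝ → E n → ℝ) (D : ℝ) : Prop :=
  ∀ x : E n, ∀ s ∈ Icc (0:ℝ) 1, |deriv (fun σ => Hs σ x) s| ≤ D

/-- A Floer trajectory of the homotopy `Γ = (H_s, J_s)`. -/
def FloerTraj {n : ℕ} (Hs : ℝ → E n → ℝ) (Js : ℝ → ℝ → E n → ℝ → (E n →L[ℝ] E n))
    (v : ℝ → ℝ → E n) (η : ℝ → ℝ) : Prop :=
  ContDiff ℝ (⊤ : ℕ∞) (fun p : ℝ × ℝ => v p.1 p.2) ∧ ContDiff ℝ (⊤ : ℕ∞) η ∧ (∀ s, IsLoop (v s)) ∧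
  (∀ s t, deriv (fun σ => v σ t) s
      = -((Js s t (v s t) (η s)) (deriv (v s) t - η s • XH (Hs s) (v s t)))) ∧
  ∀ s, deriv η s = -∫ t in (0:ℝ)..1, Hs s (v s t)

/-- Convergence in `W^{1,2}(S¹) × ℝ` as `s → -∞`. -/
def ConvAtBot {n : ℕ} (v : ℝ → ℝ → E n) (η : ℝ → ℝ) (lv : ℝ → E n) (lη : ℝ) : Prop :=
  Filter.Tendsto (fun s => W12dist (v s) lv + |η s - lη|) Filter.atBot (nhds 0)

/-- Convergence in `W^{1,2}(S¹) × ℝ` as `s → +∞`. -/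
def ConvAtTop {n : ℕ} (v : ℝ → ℝ → E n) (η : ℝ → ℝ) (lv : ℝ → E n) (lη : ℝ) : Prop :=
  Filter.Tendsto (fun s => W12dist (v s) lv + |η s - lη|) Filter.atTop (nhds 0)

/-- Membership in the family `HH + 𝒪(HH)`: a compactly supported (in `K`) perturbation of `HH`
satisfying (H1), (H2), (H3) with the common set of parameters, together with the common
quadratic growth constants. -/
def InFamily {n : ℕ} (HH : E n → ℝ) (K : Set (E n))
    (c₁ c₂ c₃ L c₄ c₅ ν M h₁ : ℝ) (H : E n → ℝ) : Prop :=
  ContDiff ℝ (⊤ : ℕ∞) H ∧ (∀ x ∉ K, H x = HH x) ∧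
  SatH1 H c₁ c₂ c₃ ∧ SatH2 H L ∧ SatH3 H c₄ c₅ ν ∧ HessBound H M ∧ GradBound H M h₁

open Filter

/-!
Along a Floer trajectory `u = (v, η)` the action `𝒜^{H_s}(u(s))` has derivative
`‖∂_s u‖²_{g_J} - η ∫ ∂_s H_s(v)`, and the last term lives on `s ∈ [0, 1]`, where it is at most
`Y ‖∂_s H_s‖_∞` for `Y = max_{[0,1]} |η|`. Integrating, `Y ‖∂_s H_s‖_∞` is the only error in the
bounds of action and energy by the asymptotic actions. The multiplier satisfies
`|η| ≤ c̃ (|𝒜| + 1)` wherever the action gradient is smaller than `ε₀`; elsewhere the energy density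
is bounded below, so such times come in intervals of finite length, on which the variation of `η` is
at most a multiple of the energy. This bounds `Y` by an expression containing `Y ‖∂_s H_s‖_∞` with a
small coefficient, which is absorbed in the left-hand side.
-/

section PartialDerivatives

variable {X F : Type*} [NormedAddCommGroup X] [NormedSpace ℝ X]
  [NormedAddCommGroup F] [NormedSpace ℝ F] {m k : WithTop ℕ∞}

lemma contDiff_deriv_left {f : ℝ → X → F} (hf : ContDiff ℝ k (Function.uncurry f))
    (hmk : m + 1 ≤ k) : ContDiff ℝ m fun p : ℝ × X => deriv (fun σ => f σ p.2) p.1 := by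
  have hswap : ContDiff ℝ k (Function.uncurry fun (p : ℝ × X) σ => f σ p.2) :=
    hf.comp (contDiff_snd.prodMk (contDiff_snd.comp contDiff_fst))
  exact hswap.fderiv_apply contDiff_fst contDiff_const hmk

lemma contDiff_fderiv_right {f : ℝ → X → F} (hf : ContDiff ℝ k (Function.uncurry f))
    (hmk : m + 1 ≤ k) : ContDiff ℝ m fun p : ℝ × X => fderiv ℝ (f p.1) p.2 := by
  have hfst : ContDiff ℝ k (Function.uncurry fun (p : ℝ × X) x => f p.1 x) :=
    hf.comp ((contDiff_fst.comp contDiff_fst).prodMk contDiff_snd)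
  exact hfst.fderiv contDiff_snd hmk

lemma contDiff_deriv_right {f : ℝ → ℝ → F} (hf : ContDiff ℝ k (Function.uncurry f))
    (hmk : m + 1 ≤ k) : ContDiff ℝ m fun p : ℝ × ℝ => deriv (f p.1) p.2 :=
  (contDiff_fderiv_right hf hmk).clm_apply contDiff_const

lemma hasDerivAt_left_of_uncurry {f : ℝ → X → F} {s : ℝ} {x : X}
    (hf : DifferentiableAt ℝ (Function.uncurry f) (s, x)) :
    HasDerivAt (fun σ => f σ x) (fderiv ℝ (Function.uncurry f) (s, x) (1, 0)) s :=
  HasFDerivAt.comp_hasDerivAt (f := fun σ : ℝ => (σ, x)) s hf.hasFDerivAt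
    ((hasDerivAt_id s).prodMk (hasDerivAt_const s x))

lemma hasFDerivAt_right_of_uncurry {f : ℝ → X → F} {s : ℝ} {x : X}
    (hf : DifferentiableAt ℝ (Function.uncurry f) (s, x)) :
    HasFDerivAt (f s)
      ((fderiv ℝ (Function.uncurry f) (s, x)).comp (ContinuousLinearMap.inr ℝ ℝ X)) x :=
  hf.hasFDerivAt.comp x (hasFDerivAt_prodMk_right s x)

lemma hasDerivAt_right_of_uncurry {f : ℝ → ℝ → F} {s t : ℝ}
    (hf : DifferentiableAt ℝ (Function.uncurry f) (s, t)) :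
    HasDerivAt (f s) (fderiv ℝ (Function.uncurry f) (s, t) (0, 1)) t :=
  (hasFDerivAt_right_of_uncurry hf).hasDerivAt

lemma hasDerivAt_deriv_left {f : ℝ → X → F} (hf : ContDiff ℝ 1 (Function.uncurry f)) (s : ℝ)
    (x : X) : HasDerivAt (fun σ => f σ x) (deriv (fun σ => f σ x) s) s :=
  (hasDerivAt_left_of_uncurry
    (hf.differentiable one_ne_zero (s, x))).differentiableAt.hasDerivAt

lemma hasDerivAt_deriv_right {f : ℝ → ℝ → F} (hf : ContDiff ℝ 1 (Function.uncurry f)) (s t : ℝ) :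
    HasDerivAt (f s) (deriv (f s) t) t :=
  (hasDerivAt_right_of_uncurry
    (hf.differentiable one_ne_zero (s, t))).differentiableAt.hasDerivAt

lemma deriv_right_deriv_left_comm {f : ℝ → ℝ → F} (hf : ContDiff ℝ 2 (Function.uncurry f))
    (s t : ℝ) :
    deriv (fun τ => deriv (fun σ => f σ τ) s) t = deriv (fun σ => deriv (f σ) t) s := by
  have hd : Differentiable ℝ (Function.uncurry f) := hf.differentiable two_ne_zero
  have hd' : Differentiable ℝ (fderiv ℝ (Function.uncurry f)) :=
    (hf.fderiv_right (m := 1) (by norm_num)).differentiable one_ne_zero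
  simp only [fun τ => (hasDerivAt_left_of_uncurry (hd (s, τ))).deriv,
    fun σ => (hasDerivAt_right_of_uncurry (hd (σ, t))).deriv]
  have hsymm := hf.contDiffAt (x := (s, t)).isSymmSndFDerivAt
    (by simp only [minSmoothness_of_isRCLikeNormedField, le_refl]) (0, 1) (1, 0)
  have hright := (hasDerivAt_right_of_uncurry (f := fun σ τ => fderiv ℝ (Function.uncurry f) (σ, τ))
    (hd' (s, t))).clm_apply (hasDerivAt_const t ((1 : ℝ), (0 : ℝ)))
  have hleft := (hasDerivAt_left_of_uncurry (f := fun σ τ => fderiv ℝ (Function.uncurry f) (σ, τ))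
    (hd' (s, t))).clm_apply (hasDerivAt_const s ((0 : ℝ), (1 : ℝ)))
  rw [hright.deriv, hleft.deriv, map_zero, add_zero, add_zero]
  exact hsymm

lemma hasDerivAt_comp_curve {f : ℝ → X → F} {c : ℝ → X} {c' : X} {s : ℝ}
    (hf : DifferentiableAt ℝ (Function.uncurry f) (s, c s)) (hc : HasDerivAt c c' s) :
    HasDerivAt (fun σ => f σ (c σ)) (deriv (fun σ => f σ (c s)) s + fderiv ℝ (f s) (c s) c') s := by
  have hpair : HasDerivAt (fun σ => f σ (c σ)) (fderiv ℝ (Function.uncurry f) (s, c s) (1, c')) s :=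
    HasFDerivAt.comp_hasDerivAt (f := fun σ => (σ, c σ)) s hf.hasFDerivAt
      ((hasDerivAt_id s).prodMk hc)
  convert hpair using 1
  rw [(hasDerivAt_left_of_uncurry hf).deriv, (hasFDerivAt_right_of_uncurry hf).fderiv,
    ContinuousLinearMap.comp_apply, ContinuousLinearMap.inr_apply, ← map_add, Prod.mk_add_mk,
    add_zero, zero_add]

end PartialDerivatives

section ParametricIntegrals

variable {F : Type*} [NormedAddCommGroup F] [NormedSpace ℝ F]

lemma hasDerivAt_intervalIntegral_of_contDiff {f : ℝ → ℝ → F}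
    (hf : ContDiff ℝ 1 (Function.uncurry f)) (a b s : ℝ) :
    HasDerivAt (fun σ => ∫ t in a..b, f σ t) (∫ t in a..b, deriv (fun σ => f σ t) s) s := by
  have hcont : ∀ σ, Continuous (f σ) := fun σ => hf.continuous.comp (Continuous.prodMk_right σ)
  have hcont' : Continuous fun p : ℝ × ℝ => deriv (fun σ => f σ p.2) p.1 :=
    (contDiff_deriv_left hf (zero_add 1).le).continuous
  obtain ⟨C, hC⟩ := ((isCompact_Icc (a := s - 1) (b := s + 1)).prod
    (isCompact_uIcc (a := a) (b := b))).exists_bound_of_continuousOn hcont'.continuousOn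
  refine (hasDerivAt_integral_of_dominated_loc_of_deriv_le (F := f) (bound := fun _ => C)
    (Icc_mem_nhds (sub_one_lt s) (lt_add_one s)) (.of_forall fun σ => ?_)
    ((hcont s).intervalIntegrable a b)
    (hcont'.comp (Continuous.prodMk_right s)).aestronglyMeasurable
    (.of_forall fun t ht σ hσ => hC (σ, t) ⟨hσ, uIoc_subset_uIcc ht⟩)
    intervalIntegrable_const (.of_forall fun t _ σ _ => ?_)).2
  · exact (hcont σ).aestronglyMeasurable
  · exact hasDerivAt_deriv_left hf σ t

lemma hasDerivAt_intervalIntegral_comp_of_contDiff {X : Type*} [NormedAddCommGroup X]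
    [NormedSpace ℝ X] {f : ℝ → X → F} {v : ℝ → ℝ → X} (hf : ContDiff ℝ 1 (Function.uncurry f))
    (hv : ContDiff ℝ 1 (Function.uncurry v)) (a b s : ℝ) :
    HasDerivAt (fun σ => ∫ t in a..b, f σ (v σ t))
      ((∫ t in a..b, deriv (fun σ => f σ (v s t)) s)
        + ∫ t in a..b, fderiv ℝ (f s) (v s t) (deriv (fun σ => v σ t) s)) s := by
  have hcurve : Continuous fun t => (s, v s t) :=
    continuous_const.prodMk (hv.continuous.comp (Continuous.prodMk_right s))
  have hleft : Continuous fun t => deriv (fun σ => f σ (v s t)) s :=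
    (contDiff_deriv_left hf (zero_add 1).le).continuous.comp hcurve
  have hright : Continuous fun t => fderiv ℝ (f s) (v s t) (deriv (fun σ => v σ t) s) :=
    ((contDiff_fderiv_right hf (zero_add 1).le).continuous.comp hcurve).clm_apply
      ((contDiff_deriv_left hv (zero_add 1).le).continuous.comp (Continuous.prodMk_right s))
  have hcomp : ContDiff ℝ 1 (Function.uncurry fun s t => f s (v s t)) :=
    hf.comp (contDiff_fst.prodMk hv)
  rw [← integral_add (hleft.intervalIntegrable a b) (hright.intervalIntegrable a b)]
  refine (hasDerivAt_intervalIntegral_of_contDiff hcomp a b s).congr_deriv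
    (integral_congr fun t _ => ?_)
  exact (hasDerivAt_comp_curve (c := fun σ => v σ t) (hf.differentiable one_ne_zero _)
    (hasDerivAt_deriv_left hv s t)).deriv

lemma deriv_half_apply_deriv_of_antisymm {B : F →L[ℝ] F →L[ℝ] ℝ} (hB : ∀ x y, B x y = -B y x)
    {v : ℝ → ℝ → F} (hv : ContDiff ℝ 2 (Function.uncurry v)) (s t : ℝ) :
    deriv (fun σ => (1 / 2) * B (v σ t) (deriv (v σ) t)) s
      = B (deriv (fun σ => v σ t) s) (deriv (v s) t)
        + (1 / 2) * deriv (fun τ => B (v s τ) (deriv (fun σ => v σ τ) s)) t := by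
  have hv1 : ContDiff ℝ 1 (Function.uncurry v) := hv.of_le one_le_two
  have hvs : ContDiff ℝ 1 (Function.uncurry fun s t => deriv (fun σ => v σ t) s) :=
    contDiff_deriv_left hv one_add_one_eq_two.le
  have hvt : ContDiff ℝ 1 (Function.uncurry fun s t => deriv (v s) t) :=
    contDiff_deriv_right hv one_add_one_eq_two.le
  have hleft := (B.hasDerivAt_of_bilinear (fun _ => hasDerivAt_deriv_left hv1 s t)
    fun _ => hasDerivAt_deriv_left hvt s t).const_mul (1 / 2)
  have hright := B.hasDerivAt_of_bilinear (fun _ => hasDerivAt_deriv_right hv1 s t)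
    fun _ => hasDerivAt_deriv_right hvs s t
  rw [hleft.deriv, hright.deriv, deriv_right_deriv_left_comm hv, hB (deriv (v s) t)]
  ring

lemma hasDerivAt_half_integral_of_antisymm {B : F →L[ℝ] F →L[ℝ] ℝ}
    (hB : ∀ x y, B x y = -B y x) {v : ℝ → ℝ → F} (hv : ContDiff ℝ 2 (Function.uncurry v))
    {a b : ℝ} (hloop : ∀ s, v s b = v s a) (s : ℝ) :
    HasDerivAt (fun σ => ∫ t in a..b, (1 / 2) * B (v σ t) (deriv (v σ) t))
      (∫ t in a..b, B (deriv (fun σ => v σ t) s) (deriv (v s) t)) s := by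
  have hv1 : ContDiff ℝ 1 (Function.uncurry v) := hv.of_le one_le_two
  have hvs : ContDiff ℝ 1 (Function.uncurry fun s t => deriv (fun σ => v σ t) s) :=
    contDiff_deriv_left hv one_add_one_eq_two.le
  have hvt : ContDiff ℝ 1 (Function.uncurry fun s t => deriv (v s) t) :=
    contDiff_deriv_right hv one_add_one_eq_two.le
  have hdensity :
      ContDiff ℝ 1 (Function.uncurry fun s t => (1 / 2 : ℝ) * B (v s t) (deriv (v s) t)) :=
    contDiff_const.mul ((B.contDiff.comp hv1).clm_apply hvt)
  have hboundary : ContDiff ℝ 1 fun t => B (v s t) (deriv (fun σ => v σ t) s) :=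
    (B.contDiff.comp (hv1.comp (contDiff_prodMk_right s))).clm_apply
      (hvs.comp (contDiff_prodMk_right s))
  have hboundary_integral :
      ∫ t in a..b, deriv (fun t => B (v s t) (deriv (fun σ => v σ t) s)) t = 0 := by
    rw [integral_deriv_eq_sub (fun t _ => hboundary.differentiable one_ne_zero t)
      (hboundary.continuous_deriv_one.intervalIntegrable a b)]
    simp only [hloop, sub_self]
  have hcont : Continuous fun t => B (deriv (fun σ => v σ t) s) (deriv (v s) t) :=
    (B.continuous.comp (hvs.continuous.comp (Continuous.prodMk_right s))).clm_apply
      (hvt.continuous.comp (Continuous.prodMk_right s))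
  refine (hasDerivAt_intervalIntegral_of_contDiff hdensity a b s).congr_deriv ?_
  simp only [deriv_half_apply_deriv_of_antisymm hB hv]
  rw [integral_add (hcont.intervalIntegrable a b)
    ((hboundary.continuous_deriv_one.const_mul _).intervalIntegrable a b),
    intervalIntegral.integral_const_mul, hboundary_integral, mul_zero, add_zero]

end ParametricIntegrals

section EnergyEstimates

variable {e f f' ρ : ℝ → ℝ}

lemma integral_le_sub_add_integral (hf : ∀ s, HasDerivAt f (f' s) s) (hρ : Integrable ρ)
    (hρ_nonneg : 0 ≤ ρ) (he : ∀ x y, IntervalIntegrable e volume x y)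
    (hef : ∀ s, e s ≤ f' s + ρ s) {x y : ℝ} (hxy : x ≤ y) :
    ∫ s in x..y, e s ≤ f y - f x + ∫ s, ρ s := by
  have hdiff : ∫ s in x..y, (e s - ρ s) ≤ f y - f x :=
    integral_le_sub_of_hasDeriv_right_of_le hxy
      (fun s _ => (hf s).continuousAt.continuousWithinAt) (fun s _ => (hf s).hasDerivWithinAt)
      ((intervalIntegrable_iff_integrableOn_Icc_of_le hxy).1
        ((he x y).sub hρ.intervalIntegrable))
      fun s _ => sub_le_iff_le_add.2 (hef s)
  have hρ_le : ∫ s in x..y, ρ s ≤ ∫ s, ρ s := by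
    rw [integral_of_le hxy]
    exact setIntegral_le_integral hρ (.of_forall hρ_nonneg)
  rw [integral_sub (he x y) hρ.intervalIntegrable] at hdiff
  linarith

variable {A B : ℝ}

lemma integral_le_sub_add_integral_of_tendsto (hf : ∀ s, HasDerivAt f (f' s) s)
    (hρ : Integrable ρ) (hρ_nonneg : 0 ≤ ρ) (he : ∀ x y, IntervalIntegrable e volume x y)
    (he_nonneg : 0 ≤ e) (hef : ∀ s, e s ≤ f' s + ρ s) (hA : Tendsto f atBot (𝓝 A))
    (hB : Tendsto f atTop (𝓝 B)) {x y : ℝ} (hxy : x ≤ y) :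
    ∫ s in x..y, e s ≤ B - A + ∫ s, ρ s := by
  have hlim : Tendsto (fun p : ℝ × ℝ => f p.2 - f p.1 + ∫ s, ρ s) (atBot ×ˢ atTop)
      (𝓝 (B - A + ∫ s, ρ s)) :=
    ((hB.comp tendsto_snd).sub (hA.comp tendsto_fst)).add_const _
  refine ge_of_tendsto hlim ?_
  filter_upwards [(eventually_le_atBot x).prod_mk (eventually_ge_atTop y)] with p hp
  exact (integral_mono_interval hp.1 hxy hp.2 (.of_forall he_nonneg) (he _ _)).trans
    (integral_le_sub_add_integral hf hρ hρ_nonneg he hef (hp.1.trans (hxy.trans hp.2)))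

lemma mem_Icc_of_tendsto_of_neg_le_deriv (hf : ∀ s, HasDerivAt f (f' s) s) (hρ : Integrable ρ)
    (hρ_nonneg : 0 ≤ ρ) (hf' : ∀ s, -ρ s ≤ f' s) (hA : Tendsto f atBot (𝓝 A))
    (hB : Tendsto f atTop (𝓝 B)) (s : ℝ) :
    f s ∈ Icc (A - ∫ s, ρ s) (B + ∫ s, ρ s) := by
  have hmono {x y : ℝ} (hxy : x ≤ y) : f x ≤ f y + ∫ s, ρ s := by
    have hzero := integral_le_sub_add_integral (e := 0) hf hρ hρ_nonneg
      (fun _ _ => intervalIntegrable_const) (fun s => neg_le_iff_add_nonneg.1 (hf' s)) hxy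
    simp only [Pi.zero_apply, intervalIntegral.integral_zero] at hzero
    linarith
  refine ⟨sub_le_iff_le_add.2 (le_of_tendsto hA ?_), ?_⟩
  · filter_upwards [eventually_le_atBot s] with x hx using hmono hx
  · refine ge_of_tendsto (hB.add_const _) ?_
    filter_upwards [eventually_ge_atTop s] with y hy using hmono hy

lemma lintegral_ofReal_le_of_intervalIntegral_le {W : ℝ}
    (he : ∀ x y, IntervalIntegrable e volume x y) (he_nonneg : 0 ≤ e)
    (hW : ∀ x y, x ≤ y → ∫ s in x..y, e s ≤ W) :
    ∫⁻ s, ENNReal.ofReal (e s) ≤ ENNReal.ofReal W := by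
  have hneg : Tendsto (fun r : ℝ => -r) atTop atBot := tendsto_neg_atTop_atBot
  have hbound : ∀ᶠ r : ℝ in atTop, ∫ s in -r..r, e s ≤ W := by
    filter_upwards [eventually_ge_atTop 0] with r hr using hW _ _ (neg_le_self hr)
  have hint : Integrable e := by
    refine integrable_of_intervalIntegral_norm_bounded W (fun r => ?_) hneg tendsto_id ?_
    · exact (he (-r) r).1
    · simpa only [Real.norm_of_nonneg (he_nonneg _), id] using hbound
  rw [← ofReal_integral_eq_lintegral_ofReal hint (.of_forall he_nonneg)]
  exact ENNReal.ofReal_le_ofReal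
    (le_of_tendsto (intervalIntegral_tendsto_integral hint hneg tendsto_id) hbound)

lemma integrable_indicator_Icc_zero_one (c : ℝ) :
    Integrable ((Icc (0 : ℝ) 1).indicator fun _ => c) :=
  (integrable_indicator_iff measurableSet_Icc).2 (integrableOn_const (by simp))

lemma integral_indicator_Icc_zero_one (c : ℝ) :
    ∫ s, (Icc (0 : ℝ) 1).indicator (fun _ => c) s = c := by
  rw [MeasureTheory.integral_indicator_const _ measurableSet_Icc, Real.volume_real_Icc, sub_zero,
    max_eq_left zero_le_one, one_smul]

end EnergyEstimates

section MultiplierEstimates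

lemma norm_sub_le_integral_of_norm_deriv_le {F : Type*} [NormedAddCommGroup F] [NormedSpace ℝ F]
    [CompleteSpace F] {η : ℝ → F} {g : ℝ → ℝ} {x y : ℝ} (hη : ContDiff ℝ 1 η)
    (hg : IntervalIntegrable g volume x y) (hxy : x ≤ y)
    (hbound : ∀ s ∈ Ioo x y, ‖deriv η s‖ ≤ g s) :
    ‖η y - η x‖ ≤ ∫ s in x..y, g s := by
  have hη' : Continuous (deriv η) := hη.continuous_deriv_one
  rw [← integral_deriv_eq_sub (fun s _ => hη.differentiable one_ne_zero s)
    (hη'.intervalIntegrable x y)]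
  exact (intervalIntegral.norm_integral_le_integral_norm hxy).trans
    (integral_mono_on_of_le_Ioo hxy (hη'.norm.intervalIntegrable x y) hg hbound)

lemma exists_mem_Icc_lt_of_integral_lt {e : ℝ → ℝ} {δ x y : ℝ}
    (he : IntervalIntegrable e volume x y) (hxy : x ≤ y)
    (h : ∫ s in x..y, e s < δ * (y - x)) : ∃ s ∈ Icc x y, e s < δ := by
  contrapose! h
  calc δ * (y - x) = ∫ _ in x..y, δ := by
        rw [intervalIntegral.integral_const, smul_eq_mul, mul_comm]
    _ ≤ ∫ s in x..y, e s := integral_mono_on hxy intervalIntegrable_const he h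

variable {α : Type*} [ConditionallyCompleteLinearOrder α] [TopologicalSpace α] [OrderTopology α]

lemma exists_first_mem_ge_of_isClosed {S : Set α} (hS : IsClosed S) {s y : α} (hsy : s ≤ y)
    (hy : y ∈ S) : ∃ x ∈ S, s ≤ x ∧ ∀ z ∈ Ioo s x, z ∉ S := by
  have hleast := (hS.inter isClosed_Ici).isLeast_csInf ⟨y, hy, hsy⟩ ⟨s, fun _ hz => hz.2⟩
  exact ⟨_, hleast.1.1, hleast.1.2, fun z hz hzS => (hleast.2 ⟨hzS, hz.1.le⟩).not_gt hz.2⟩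

lemma exists_last_mem_le_of_isClosed {S : Set α} (hS : IsClosed S) {s y : α} (hys : y ≤ s)
    (hy : y ∈ S) : ∃ x ∈ S, x ≤ s ∧ ∀ z ∈ Ioo x s, z ∉ S := by
  have hgreatest := (hS.inter isClosed_Iic).isGreatest_csSup ⟨y, hy, hys⟩ ⟨s, fun _ hz => hz.2⟩
  exact ⟨_, hgreatest.1.1, hgreatest.1.2, fun z hz hzS =>
    (hgreatest.2 ⟨hzS, hz.2.le⟩).not_gt hz.1⟩

-- The nearest times left and right of `s` at which `‖η‖ ≤ C` both control `η s`, and the two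
-- connecting intervals share the energy `W`; averaging the estimates turns `2 * κ` into `κ`.
lemma norm_le_of_forall_lt_norm_imp {F : Type*} [NormedAddCommGroup F] [NormedSpace ℝ F]
    [CompleteSpace F] {η : ℝ → F} {e : ℝ → ℝ} {C κ δ W : ℝ} (hη : ContDiff ℝ 1 η)
    (he : ∀ x y, IntervalIntegrable e volume x y) (hδ : 0 < δ) (hκ : 0 ≤ κ)
    (hW : ∀ x y, x ≤ y → ∫ s in x..y, e s ≤ W)
    (hlarge : ∀ s, C < ‖η s‖ → δ ≤ e s ∧ ‖deriv η s‖ ≤ 2 * κ * e s) (s : ℝ) :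
    ‖η s‖ ≤ C + κ * W := by
  have hexists (x : ℝ) : ∃ y ∈ Icc x (x + (W + 1) / δ), ‖η y‖ ≤ C := by
    have hW0 : 0 ≤ W := by simpa only [integral_same] using hW 0 0 le_rfl
    have hx : x ≤ x + (W + 1) / δ := le_add_of_nonneg_right (by positivity)
    obtain ⟨y, hy, hey⟩ := exists_mem_Icc_lt_of_integral_lt (he _ _) hx <| calc
      ∫ s in x..x + (W + 1) / δ, e s ≤ W := hW _ _ hx
      _ < W + 1 := lt_add_one W
      _ = δ * (x + (W + 1) / δ - x) := by rw [add_sub_cancel_left, mul_div_cancel₀ _ hδ.ne']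
    exact ⟨y, hy, not_lt.1 fun hCy => hey.not_ge (hlarge y hCy).1⟩
  have hvar {x y : ℝ} (hxy : x ≤ y) (hC : ∀ z ∈ Ioo x y, ¬‖η z‖ ≤ C) :
      ‖η y - η x‖ ≤ 2 * κ * ∫ s in x..y, e s := by
    rw [← intervalIntegral.integral_const_mul]
    exact norm_sub_le_integral_of_norm_deriv_le hη ((he x y).const_mul _) hxy
      fun z hz => (hlarge z (not_le.1 (hC z hz))).2
  have hclosed : IsClosed {s | ‖η s‖ ≤ C} := isClosed_le hη.continuous.norm continuous_const
  obtain ⟨y₀, hy₀, hCy₀⟩ := hexists s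
  obtain ⟨y, hCy, hsy, hy⟩ := exists_first_mem_ge_of_isClosed hclosed hy₀.1 hCy₀
  obtain ⟨x₀, hx₀, hCx₀⟩ := hexists (s - (W + 1) / δ)
  rw [sub_add_cancel] at hx₀
  obtain ⟨x, hCx, hxs, hx⟩ := exists_last_mem_le_of_isClosed hclosed hx₀.2 hCx₀
  have hleft : ‖η s‖ ≤ C + 2 * κ * ∫ s in x..s, e s :=
    (norm_le_norm_add_norm_sub' _ _).trans (add_le_add hCx (hvar hxs hx))
  have hright : ‖η s‖ ≤ C + 2 * κ * ∫ s in s..y, e s :=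
    (norm_le_norm_add_norm_sub _ _).trans (add_le_add hCy (hvar hsy hy))
  have hshared : κ * ((∫ s in x..s, e s) + ∫ s in s..y, e s) ≤ κ * W := by
    rw [integral_add_adjacent_intervals (he x s) (he s y)]
    exact mul_le_mul_of_nonneg_left (hW x y (hxs.trans hsy)) hκ
  linarith

end MultiplierEstimates

section SymplecticForm

variable {n : ℕ}

lemma inner_J0_J0 (x y : E n) : ⟪J0 x, J0 y⟫ = ⟪x, y⟫ := by
  simp only [J0, PiLp.inner_apply, Complex.inner, PiLp.smul_apply, smul_eq_mul, map_mul,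
    Complex.conj_I]
  refine Finset.sum_congr rfl fun i _ => ?_
  simp

lemma J0_J0 (x : E n) : J0 (J0 x) = -x := by
  rw [J0, J0, smul_smul, Complex.I_mul_I, neg_one_smul]

lemma om_antisymm (x y : E n) : om x y = -om y x := by
  rw [om, om, ← inner_J0_J0, J0_J0, inner_neg_left, real_inner_comm]

lemma om_XH (H : E n → ℝ) (x u : E n) : om u (XH H x) = fderiv ℝ H x u := by
  rw [om, XH, inner_J0_J0, real_inner_comm, inner_gradient_left]

/-- The symplectic form `om` as a continuous bilinear map, giving access to the product rule and
to continuity. -/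
def omL (n : ℕ) : E n →L[ℝ] E n →L[ℝ] ℝ := (innerSL ℝ).comp (J0L n)

lemma omL_apply (x y : E n) : omL n x y = om x y := rfl

lemma continuous_om {T : Type*} [TopologicalSpace T] {u w : T → E n} (hu : Continuous u)
    (hw : Continuous w) : Continuous fun p => om (u p) (w p) :=
  ((omL n).continuous.comp hu).clm_apply hw

lemma om_sub_smul (u w x : E n) (r : ℝ) : om u (w - r • x) = om u w - r * om u x := by
  rw [om, inner_sub_right, real_inner_smul_right, om, om]

lemma CompatJ.om_self_nonneg {J : E n →L[ℝ] E n} (hJ : CompatJ J) (ξ : E n) :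
    0 ≤ om ξ (J ξ) := by
  rcases eq_or_ne ξ 0 with rfl | hξ
  · rw [map_zero, om, inner_zero_right]
  · exact (hJ.2.2 ξ hξ).le

lemma sq_L2 (z : ℝ → E n) : L2 z ^ 2 = ∫ t in (0 : ℝ)..1, ‖z t‖ ^ 2 :=
  Real.sq_sqrt (integral_nonneg zero_le_one fun t _ => sq_nonneg ‖z t‖)

lemma sq_L2_le_mul_integral {z : ℝ → E n} {g : ℝ → ℝ} {c : ℝ} (hz : Continuous z)
    (hg : Continuous g) (h : ∀ t, ‖z t‖ ^ 2 ≤ c * g t) :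
    L2 z ^ 2 ≤ c * ∫ t in (0 : ℝ)..1, g t := by
  rw [sq_L2, ← intervalIntegral.integral_const_mul]
  exact integral_mono zero_le_one ((hz.norm.pow 2).intervalIntegrable 0 1)
    ((continuous_const.mul hg).intervalIntegrable 0 1) h

variable {Js : ℝ → ℝ → E n → ℝ → (E n →L[ℝ] E n)} {JN : ℝ}

lemma JBound.sq_norm_le (hJN : JBound Js JN) (s t : ℝ) (x : E n) (η : ℝ) (ξ : E n) :
    ‖ξ‖ ^ 2 ≤ JN * om ξ (Js s t x η ξ) :=
  (inv_mul_le_iff₀ (zero_lt_one.trans_le hJN.1)).1 (hJN.2 s t x η ξ).1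

lemma JBound.sq_norm_apply_le (hJN : JBound Js JN) {s t : ℝ} {x : E n} {η : ℝ}
    (hJ : CompatJ (Js s t x η)) (ξ : E n) :
    ‖Js s t x η ξ‖ ^ 2 ≤ JN * om ξ (Js s t x η ξ) := by
  simpa only [hJ.2.1] using hJN.sq_norm_le s t x η (Js s t x η ξ)

end SymplecticForm

section FirstVariation

variable {n : ℕ}

/-- The mean over the loop `v s` of the variation `∂_s H_s` of the Hamiltonian. -/
def hamVariation (Hs : ℝ → E n → ℝ) (v : ℝ → ℝ → E n) (s : ℝ) : ℝ :=
  ∫ t in (0 : ℝ)..1, deriv (fun σ => Hs σ (v s t)) s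

lemma hasDerivAt_rabAction_comp {Hs : ℝ → E n → ℝ} {v : ℝ → ℝ → E n} {η : ℝ → ℝ} {η' s : ℝ}
    (hH : ContDiff ℝ 1 (Function.uncurry Hs)) (hv : ContDiff ℝ 2 (Function.uncurry v))
    (hloop : ∀ s, v s 1 = v s 0) (hη : HasDerivAt η η' s) :
    HasDerivAt (fun σ => RabAction (Hs σ) (v σ) (η σ))
      ((∫ t in (0 : ℝ)..1, om (deriv (fun σ => v σ t) s) (deriv (v s) t - η s • XH (Hs s) (v s t)))
        - (η' * ∫ t in (0 : ℝ)..1, Hs s (v s t)) - η s * hamVariation Hs v s) s := by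
  have hv1 : ContDiff ℝ 1 (Function.uncurry v) := hv.of_le one_le_two
  have hvs : Continuous fun t => deriv (fun σ => v σ t) s :=
    (contDiff_deriv_left hv1 (zero_add 1).le).continuous.comp (Continuous.prodMk_right s)
  have hvt : Continuous (deriv (v s)) :=
    (contDiff_deriv_right hv1 (zero_add 1).le).continuous.comp (Continuous.prodMk_right s)
  have hdH : Continuous fun t => fderiv ℝ (Hs s) (v s t) (deriv (fun σ => v σ t) s) :=
    ((contDiff_fderiv_right hH (zero_add 1).le).continuous.comp
      (continuous_const.prodMk (hv.continuous.comp (Continuous.prodMk_right s)))).clm_apply hvs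
  have harea := hasDerivAt_half_integral_of_antisymm (B := omL n) om_antisymm hv hloop s
  have hham := hasDerivAt_intervalIntegral_comp_of_contDiff hH hv1 0 1 s
  refine (harea.sub (hη.mul hham)).congr_deriv ?_
  simp only [om_sub_smul, om_XH, omL_apply, hamVariation]
  rw [integral_sub ((continuous_om hvs hvt).intervalIntegrable 0 1)
    ((hdH.const_mul (η s)).intervalIntegrable 0 1), intervalIntegral.integral_const_mul]
  ring

end FirstVariation

namespace dsHBound

variable {n : ℕ} {Hs : ℝ → E n → ℝ} {D Y : ℝ} {η : ℝ → ℝ}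

lemma nonneg (hD : dsHBound Hs D) : 0 ≤ D :=
  (abs_nonneg _).trans (hD 0 0 (left_mem_Icc.2 zero_le_one))

lemma mul_bound_nonneg (hD : dsHBound Hs D) (hY : ∀ s ∈ Icc (0 : ℝ) 1, |η s| ≤ Y) :
    0 ≤ Y * D :=
  mul_nonneg ((abs_nonneg _).trans (hY 0 (left_mem_Icc.2 zero_le_one))) hD.nonneg

end dsHBound

namespace IsHomotopy

variable {n : ℕ} {Hs : ℝ → E n → ℝ} {Js : ℝ → ℝ → E n → ℝ → (E n →L[ℝ] E n)} {D Y : ℝ}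
  {v : ℝ → ℝ → E n} {η : ℝ → ℝ} {s : ℝ}

lemma contDiff_ham (hhom : IsHomotopy Hs Js) : ContDiff ℝ 1 (Function.uncurry Hs) :=
  hhom.1.of_le (by exact_mod_cast le_top)

lemma eventually_ham_eq (hhom : IsHomotopy Hs Js) (hs : s ∉ Icc (0 : ℝ) 1) :
    ∃ H, ∀ᶠ σ in 𝓝 s, Hs σ = H := by
  rcases lt_or_ge s 0 with hs0 | hs0
  · exact ⟨Hs 0, by filter_upwards [Iic_mem_nhds hs0] with σ hσ using (hhom.2.2.1 σ hσ).1⟩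
  · have hs1 : 1 < s := not_le.1 fun hs1 => hs ⟨hs0, hs1⟩
    exact ⟨Hs 1, by filter_upwards [Ici_mem_nhds hs1] with σ hσ using (hhom.2.2.2.1 σ hσ).1⟩

lemma hamVariation_eq_zero (hhom : IsHomotopy Hs Js) (hs : s ∉ Icc (0 : ℝ) 1) :
    hamVariation Hs v s = 0 := by
  obtain ⟨H, hH⟩ := hhom.eventually_ham_eq hs
  have hderiv (x : E n) : deriv (fun σ => Hs σ x) s = 0 := by
    have hconst : (fun σ => Hs σ x) =ᶠ[𝓝 s] fun _ => H x := hH.mono fun σ hσ => congrFun hσ x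
    rw [hconst.deriv_eq, deriv_const]
  simp only [hamVariation, hderiv, intervalIntegral.integral_zero]

lemma mul_hamVariation_le_indicator (hhom : IsHomotopy Hs Js) (hD : dsHBound Hs D)
    (hY : ∀ s ∈ Icc (0 : ℝ) 1, |η s| ≤ Y) (s : ℝ) :
    η s * hamVariation Hs v s ≤ (Icc (0 : ℝ) 1).indicator (fun _ => Y * D) s := by
  by_cases hs : s ∈ Icc (0 : ℝ) 1
  · rw [indicator_of_mem hs]
    have hvar : |hamVariation Hs v s| ≤ D := by
      simpa only [hamVariation, Real.norm_eq_abs, sub_zero, abs_one, mul_one] using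
        norm_integral_le_of_norm_le_const (f := fun t => deriv (fun σ => Hs σ (v s t)) s)
          (a := 0) (b := 1) fun t _ => hD (v s t) s hs
    calc η s * hamVariation Hs v s ≤ |η s| * |hamVariation Hs v s| := by
          rw [← abs_mul]; exact le_abs_self _
      _ ≤ Y * D := mul_le_mul (hY s hs) hvar (abs_nonneg _) ((abs_nonneg _).trans (hY s hs))
  · rw [indicator_of_notMem hs, hhom.hamVariation_eq_zero hs, mul_zero]

end IsHomotopy

/-- The squared speed `‖∂_s u‖²_{g_{J_s}}` at time `s` of the path `u = (v, η)`, measured in the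
metric on loops and multipliers that is determined by `J_s`. -/
def energyDensity {n : ℕ} (Js : ℝ → ℝ → E n → ℝ → (E n →L[ℝ] E n)) (v : ℝ → ℝ → E n)
    (η : ℝ → ℝ) (s : ℝ) : ℝ :=
  (∫ t in (0 : ℝ)..1,
      om (deriv (fun σ => v σ t) s) (Js s t (v s t) (η s) (deriv (fun σ => v σ t) s)))
    + deriv η s ^ 2

lemma energyDensity_nonneg {n : ℕ} {Js : ℝ → ℝ → E n → ℝ → (E n →L[ℝ] E n)}
    (hJ : ∀ s t x η, CompatJ (Js s t x η)) (v : ℝ → ℝ → E n) (η : ℝ → ℝ) :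
    0 ≤ energyDensity Js v η := fun _ =>
  add_nonneg (integral_nonneg zero_le_one fun _ _ => (hJ _ _ _ _).om_self_nonneg _) (sq_nonneg _)

namespace FloerTraj

variable {n : ℕ} {Hs : ℝ → E n → ℝ} {Js : ℝ → ℝ → E n → ℝ → (E n →L[ℝ] E n)} {JN : ℝ}
  {v : ℝ → ℝ → E n} {η : ℝ → ℝ}

lemma contDiff_loop (hu : FloerTraj Hs Js v η) {k : ℕ} : ContDiff ℝ k (Function.uncurry v) :=
  hu.1.of_le (by exact_mod_cast le_top)

lemma contDiff_multiplier (hu : FloerTraj Hs Js v η) : ContDiff ℝ 1 η :=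
  hu.2.1.of_le (by exact_mod_cast le_top)

lemma loop_one_eq_loop_zero (hu : FloerTraj Hs Js v η) (s : ℝ) : v s 1 = v s 0 := by
  simpa only [zero_add] using (hu.2.2.1 s).2 0

lemma deriv_sub_smul_XH (hu : FloerTraj Hs Js v η) (hhom : IsHomotopy Hs Js) (s t : ℝ) :
    deriv (v s) t - η s • XH (Hs s) (v s t)
      = Js s t (v s t) (η s) (deriv (fun σ => v σ t) s) := by
  rw [hu.2.2.2.1, map_neg, (hhom.2.2.2.2 _ _ _ _).1, neg_neg]

lemma continuous_deriv_loop (hu : FloerTraj Hs Js v η) :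
    Continuous fun p : ℝ × ℝ => deriv (fun σ => v σ p.2) p.1 :=
  (contDiff_deriv_left (hu.contDiff_loop (k := 1)) (zero_add 1).le).continuous

lemma continuous_apply_deriv_loop (hu : FloerTraj Hs Js v η) (hhom : IsHomotopy Hs Js) :
    Continuous fun p : ℝ × ℝ =>
      Js p.1 p.2 (v p.1 p.2) (η p.1) (deriv (fun σ => v σ p.2) p.1) :=
  (hhom.2.1.continuous.comp (continuous_fst.prodMk (continuous_snd.prodMk
    (hu.1.continuous.prodMk (hu.2.1.continuous.comp continuous_fst))))).clm_apply
      hu.continuous_deriv_loop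

lemma continuous_energyDensity (hu : FloerTraj Hs Js v η) (hhom : IsHomotopy Hs Js) :
    Continuous (energyDensity Js v η) :=
  (continuous_parametric_intervalIntegral_of_continuous'
    (continuous_om hu.continuous_deriv_loop (hu.continuous_apply_deriv_loop hhom)) 0 1).add
      (hu.contDiff_multiplier.continuous_deriv_one.pow 2)

lemma hasDerivAt_rabAction (hu : FloerTraj Hs Js v η) (hhom : IsHomotopy Hs Js) (s : ℝ) :
    HasDerivAt (fun σ => RabAction (Hs σ) (v σ) (η σ))
      (energyDensity Js v η s - η s * hamVariation Hs v s) s := by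
  refine (hasDerivAt_rabAction_comp hhom.contDiff_ham hu.contDiff_loop hu.loop_one_eq_loop_zero
    (hu.contDiff_multiplier.differentiable one_ne_zero s).hasDerivAt).congr_deriv ?_
  have hmean : ∫ t in (0 : ℝ)..1, Hs s (v s t) = -deriv η s := by rw [hu.2.2.2.2, neg_neg]
  simp only [hu.deriv_sub_smul_XH hhom, hmean, energyDensity]
  ring

lemma sq_L2_deriv_add_sq_le (hu : FloerTraj Hs Js v η) (hhom : IsHomotopy Hs Js)
    (hJN : JBound Js JN) (s : ℝ) :
    L2 (fun t => deriv (fun σ => v σ t) s) ^ 2 + deriv η s ^ 2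
      ≤ JN * energyDensity Js v η s := by
  rw [energyDensity, mul_add]
  have hvs := hu.continuous_deriv_loop.comp (Continuous.prodMk_right s)
  have hJvs := (hu.continuous_apply_deriv_loop hhom).comp (Continuous.prodMk_right s)
  exact add_le_add
    (sq_L2_le_mul_integral hvs (continuous_om hvs hJvs) fun t => hJN.sq_norm_le _ _ _ _ _)
    (le_mul_of_one_le_left (sq_nonneg _) hJN.1)

lemma sq_gradNorm_le (hu : FloerTraj Hs Js v η) (hhom : IsHomotopy Hs Js)
    (hJN : JBound Js JN) (s : ℝ) :
    gradNorm (Hs s) (v s) (η s) ^ 2 ≤ 2 * (JN * energyDensity Js v η s) := by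
  have hvs := hu.continuous_deriv_loop.comp (Continuous.prodMk_right s)
  have hJvs := (hu.continuous_apply_deriv_loop hhom).comp (Continuous.prodMk_right s)
  have hloop : L2 (fun t => Js s t (v s t) (η s) (deriv (fun σ => v σ t) s)) ^ 2
      ≤ JN * ∫ t in (0 : ℝ)..1, om (deriv (fun σ => v σ t) s)
          (Js s t (v s t) (η s) (deriv (fun σ => v σ t) s)) :=
    sq_L2_le_mul_integral hJvs (continuous_om hvs hJvs) fun t =>
      hJN.sq_norm_apply_le (hhom.2.2.2.2 _ _ _ _) _
  have hmult : deriv η s ^ 2 ≤ JN * deriv η s ^ 2 := le_mul_of_one_le_left (sq_nonneg _) hJN.1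
  simp only [gradNorm, hu.deriv_sub_smul_XH hhom]
  rw [← abs_neg, ← hu.2.2.2.2 s]
  refine add_sq_le.trans (mul_le_mul_of_nonneg_left ?_ two_pos.le)
  rw [sq_abs, energyDensity, mul_add]
  exact add_le_add hloop hmult

lemma abs_deriv_le_gradNorm (hu : FloerTraj Hs Js v η) (s : ℝ) :
    |deriv η s| ≤ gradNorm (Hs s) (v s) (η s) := by
  rw [hu.2.2.2.2, abs_neg]
  exact le_add_of_nonneg_left (Real.sqrt_nonneg _)

variable {D Y A B : ℝ}

lemma rabAction_mem_Icc (hu : FloerTraj Hs Js v η) (hhom : IsHomotopy Hs Js)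
    (hD : dsHBound Hs D) (hY : ∀ s ∈ Icc (0 : ℝ) 1, |η s| ≤ Y)
    (hA : Tendsto (fun s => RabAction (Hs s) (v s) (η s)) atBot (𝓝 A))
    (hB : Tendsto (fun s => RabAction (Hs s) (v s) (η s)) atTop (𝓝 B)) (s : ℝ) :
    RabAction (Hs s) (v s) (η s) ∈ Icc (A - Y * D) (B + Y * D) := by
  rw [← integral_indicator_Icc_zero_one (Y * D)]
  refine mem_Icc_of_tendsto_of_neg_le_deriv (hu.hasDerivAt_rabAction hhom)
    (integrable_indicator_Icc_zero_one _)
    (indicator_nonneg fun _ _ => hD.mul_bound_nonneg hY) (fun s => ?_) hA hB s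
  have hvar := hhom.mul_hamVariation_le_indicator (v := v) hD hY s
  have henergy := energyDensity_nonneg hhom.2.2.2.2 v η s
  rw [Pi.zero_apply] at henergy
  linarith

lemma integral_energyDensity_le (hu : FloerTraj Hs Js v η) (hhom : IsHomotopy Hs Js)
    (hD : dsHBound Hs D) (hY : ∀ s ∈ Icc (0 : ℝ) 1, |η s| ≤ Y)
    (hA : Tendsto (fun s => RabAction (Hs s) (v s) (η s)) atBot (𝓝 A))
    (hB : Tendsto (fun s => RabAction (Hs s) (v s) (η s)) atTop (𝓝 B)) {x y : ℝ} (hxy : x ≤ y) :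
    ∫ s in x..y, energyDensity Js v η s ≤ B - A + Y * D := by
  rw [← integral_indicator_Icc_zero_one (Y * D)]
  refine integral_le_sub_add_integral_of_tendsto (hu.hasDerivAt_rabAction hhom)
    (integrable_indicator_Icc_zero_one _)
    (indicator_nonneg fun _ _ => hD.mul_bound_nonneg hY)
    (hu.continuous_energyDensity hhom).intervalIntegrable
    (energyDensity_nonneg hhom.2.2.2.2 v η) (fun s => ?_) hA hB hxy
  linarith [hhom.mul_hamVariation_le_indicator (v := v) hD hY s]

lemma abs_multiplier_le {ε₀ κ C W : ℝ} (hu : FloerTraj Hs Js v η) (hhom : IsHomotopy Hs Js)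
    (hJN : JBound Js JN) (hε₀ : 0 < ε₀) (hκ : JN / ε₀ ≤ κ)
    (hC : ∀ s, gradNorm (Hs s) (v s) (η s) < ε₀ → |η s| ≤ C)
    (hW : ∀ x y, x ≤ y → ∫ s in x..y, energyDensity Js v η s ≤ W) (s : ℝ) :
    |η s| ≤ C + κ * W := by
  have hJN0 : 0 < JN := zero_lt_one.trans_le hJN.1
  refine norm_le_of_forall_lt_norm_imp hu.contDiff_multiplier
    (hu.continuous_energyDensity hhom).intervalIntegrable
    (show 0 < ε₀ ^ 2 / (2 * JN) by positivity) ((div_pos hJN0 hε₀).le.trans hκ) hW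
    (fun s hs => ?_) s
  have hgrad : ε₀ ≤ gradNorm (Hs s) (v s) (η s) := not_lt.1 fun h => hs.not_ge (hC s h)
  have hsq := hu.sq_gradNorm_le hhom hJN s
  refine ⟨?_, ?_⟩
  · rw [div_le_iff₀ (by positivity)]
    linarith [pow_le_pow_left₀ hε₀.le hgrad 2]
  · have hderiv : |deriv η s| * ε₀ ≤ 2 * (JN * energyDensity Js v η s) := calc
      |deriv η s| * ε₀ ≤ gradNorm (Hs s) (v s) (η s) * gradNorm (Hs s) (v s) (η s) :=
        mul_le_mul (hu.abs_deriv_le_gradNorm s) hgrad hε₀.le (hε₀.le.trans hgrad)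
      _ ≤ 2 * (JN * energyDensity Js v η s) := by rwa [← sq]
    calc |deriv η s| ≤ 2 * (JN / ε₀) * energyDensity Js v η s := by
          rw [← mul_le_mul_iff_left₀ hε₀]
          exact hderiv.trans_eq (by field_simp)
      _ ≤ 2 * κ * energyDensity Js v η s := by
          gcongr
          exact energyDensity_nonneg hhom.2.2.2.2 v η s

lemma lintegral_energy_le {W : ℝ} (hu : FloerTraj Hs Js v η) (hhom : IsHomotopy Hs Js)
    (hJN : JBound Js JN) (hW : ∀ x y, x ≤ y → ∫ s in x..y, energyDensity Js v η s ≤ W) :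
    ∫⁻ s, ENNReal.ofReal (L2 (fun t => deriv (fun σ => v σ t) s) ^ 2 + deriv η s ^ 2)
      ≤ ENNReal.ofReal (JN * W) := by
  have hJN0 : 0 ≤ JN := zero_le_one.trans hJN.1
  refine (lintegral_mono fun s =>
    ENNReal.ofReal_le_ofReal (hu.sq_L2_deriv_add_sq_le hhom hJN s)).trans
      (lintegral_ofReal_le_of_intervalIntegral_le
        ((hu.continuous_energyDensity hhom).const_mul JN).intervalIntegrable
        (fun s => mul_nonneg hJN0 (energyDensity_nonneg hhom.2.2.2.2 v η s)) fun x y hxy => ?_)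
  rw [intervalIntegral.integral_const_mul]
  exact mul_le_mul_of_nonneg_left (hW x y hxy) hJN0

end FloerTraj

section Bootstrap

variable {c κ D Y m w : ℝ}

lemma add_small_mul_le_of_le (hY : 0 ≤ Y) (hsmall : (c + κ) * D ≤ 1 / 8)
    (h : Y ≤ c * (m + Y * D + 1) + κ * (w + Y * D)) :
    c * (m + Y * D + 1) + κ * (w + Y * D) ≤ 8 / 7 * (c * (m + 1) + κ * w) := by
  have habsorb : (c + κ) * D * Y ≤ 1 / 8 * Y := mul_le_mul_of_nonneg_right hsmall hY
  linarith

lemma mul_le_of_le_add_small_mul (hc : 0 ≤ c) (hκ : 0 ≤ κ) (hD : 0 ≤ D) (hm : 0 ≤ m)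
    (hY : 0 ≤ Y) (hsmall : (c + κ) * D ≤ 1 / 8)
    (h : Y ≤ c * (m + Y * D + 1) + κ * (w + Y * D)) :
    Y * D ≤ 1 / 7 * (m + 1 + |w|) := by
  have hcD : c * D ≤ 1 / 8 :=
    (mul_le_mul_of_nonneg_right (le_add_of_nonneg_right hκ) hD).trans hsmall
  have hκD : κ * D ≤ 1 / 8 :=
    (mul_le_mul_of_nonneg_right (le_add_of_nonneg_left hc) hD).trans hsmall
  calc Y * D ≤ 8 / 7 * (c * (m + 1) + κ * w) * D :=
        mul_le_mul_of_nonneg_right (h.trans (add_small_mul_le_of_le hY hsmall h)) hD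
    _ = 8 / 7 * (c * D * (m + 1) + κ * D * w) := by ring
    _ ≤ 8 / 7 * (c * D * (m + 1) + κ * D * |w|) := by
        gcongr
        exact le_abs_self w
    _ ≤ 8 / 7 * (1 / 8 * (m + 1) + 1 / 8 * |w|) := by gcongr
    _ = 1 / 7 * (m + 1 + |w|) := by ring

end Bootstrap

theorem uniform_bounds_along_Floer_trajectories_general {n : ℕ} {Hs : ℝ → E n → ℝ}
    {Js : ℝ → ℝ → E n → ℝ → (E n →L[ℝ] E n)} {JN D ε₀ c κ a b A B : ℝ}
    {v : ℝ → ℝ → E n} {η : ℝ → ℝ} (hhom : IsHomotopy Hs Js) (hJN : JBound Js JN)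
    (hD : dsHBound Hs D) (hε₀ : 0 < ε₀) (hc : 0 ≤ c) (hκ : JN / ε₀ ≤ κ)
    (hsmall : (c + κ) * D ≤ 1 / 8) (hu : FloerTraj Hs Js v η)
    (hlin : ∀ s, gradNorm (Hs s) (v s) (η s) < ε₀ →
      |η s| ≤ c * (|RabAction (Hs s) (v s) (η s)| + 1))
    (hA : Tendsto (fun s => RabAction (Hs s) (v s) (η s)) atBot (𝓝 A)) (haA : a ≤ A)
    (hB : Tendsto (fun s => RabAction (Hs s) (v s) (η s)) atTop (𝓝 B)) (hBb : B ≤ b) :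
    (∀ s, |η s| ≤ 8 / 7 * (c * (max |a| |b| + 1) + κ * (b - a))) ∧
    (∀ s, |RabAction (Hs s) (v s) (η s)| ≤ 1 / 7 * (8 * max |a| |b| + 1 + |b - a|)) ∧
    ∫⁻ s, ENNReal.ofReal (L2 (fun t => deriv (fun σ => v σ t) s) ^ 2 + deriv η s ^ 2)
      ≤ ENNReal.ofReal (1 / 7 * JN * (8 * |b - a| + max |a| |b| + 1)) := by
  have hJN0 : 0 < JN := zero_lt_one.trans_le hJN.1
  have hκ0 : 0 ≤ κ := (div_pos hJN0 hε₀).le.trans hκ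
  obtain ⟨s₀, -, hmax⟩ := isCompact_Icc.exists_isMaxOn (nonempty_Icc.2 (zero_le_one' ℝ))
    hu.contDiff_multiplier.continuous.abs.continuousOn
  set Y := |η s₀|
  set m := max |a| |b|
  have hY : ∀ s ∈ Icc (0 : ℝ) 1, |η s| ≤ Y := fun _ hs => hmax hs
  have haction (s : ℝ) : |RabAction (Hs s) (v s) (η s)| ≤ m + Y * D := by
    have hmem := hu.rabAction_mem_Icc hhom hD hY hA hB s
    rw [abs_le]
    constructor <;> linarith [hmem.1, hmem.2, neg_abs_le a, le_abs_self b,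
      le_max_left |a| |b|, le_max_right |a| |b|]
  have henergy (x y : ℝ) (hxy : x ≤ y) :
      ∫ s in x..y, energyDensity Js v η s ≤ b - a + Y * D := by
    linarith [hu.integral_energyDensity_le hhom hD hY hA hB hxy]
  have hη (s : ℝ) : |η s| ≤ c * (m + Y * D + 1) + κ * (b - a + Y * D) := by
    refine hu.abs_multiplier_le hhom hJN hε₀ hκ (fun s hs => (hlin s hs).trans ?_) henergy s
    gcongr
    exact haction s
  have hYD : Y * D ≤ 1 / 7 * (m + 1 + |b - a|) :=
    mul_le_of_le_add_small_mul hc hκ0 hD.nonneg (by positivity) (abs_nonneg _) hsmall (hη s₀)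
  refine ⟨fun s => ?_, fun s => ?_, ?_⟩
  · exact (hη s).trans (add_small_mul_le_of_le (abs_nonneg _) hsmall (hη s₀))
  · linarith [haction s]
  · refine (hu.lintegral_energy_le hhom hJN henergy).trans (ENNReal.ofReal_le_ofReal ?_)
    calc JN * (b - a + Y * D) ≤ JN * (|b - a| + 1 / 7 * (m + 1 + |b - a|)) := by
          gcongr
          exact le_abs_self _
      _ = 1 / 7 * JN * (8 * |b - a| + m + 1) := by ring

/-- **Proposition 3.3 (uniform bounds on multiplier, action and energy along Floer
trajectories of a homotopy).** -/
theorem uniform_bounds_along_Floer_trajectories {n : ℕ} (HH : E n → ℝ) (K : Set (E n))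
    (hK : IsCompact K) (hKne : K.Nonempty)
    (c₁ c₂ c₃ L c₄ c₅ ν M h₁ : ℝ)
    (hc₁ : 0 < c₁) (hc₂ : 0 < c₂) (hc₃ : 0 ≤ c₃) (hL : 0 ≤ L)
    (hc₄ : 0 < c₄) (hc₅ : 0 < c₅) (hν : 0 < ν) (hM : 0 < M) (hh₁ : 0 ≤ h₁)
    (hHH : InFamily HH K c₁ c₂ c₃ L c₄ c₅ ν M h₁ HH)
    -- the homotopy
    (Hs : ℝ → E n → ℝ) (Js : ℝ → ℝ → E n → ℝ → (E n →L[ℝ] E n)) (JN D : ℝ)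
    (hhom : IsHomotopy Hs Js)
    (hfam : ∀ s, InFamily HH K c₁ c₂ c₃ L c₄ c₅ ν M h₁ (Hs s))
    (hJN : JBound Js JN)
    (hD : dsHBound Hs D) (hD0 : 0 ≤ D)
    -- the constants ε₀, c̃ of the linearity property
    (ε₀ ctil : ℝ) (hε₀ : 0 < ε₀) (hctil : 0 < ctil)
    (hlin : ∀ H, InFamily HH K c₁ c₂ c₃ L c₄ c₅ ν M h₁ H →
      ∀ (v : ℝ → E n) (η : ℝ), IsLoop v →
        gradNorm H v η < ε₀ → |η| ≤ ctil * (|RabAction H v η| + 1))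
    (hsmall : (ctil + JN ^ ((3:ℝ)/2) / ε₀) * D < 1 / 8)
    -- the Floer trajectory and its asymptotic action bounds
    (v : ℝ → ℝ → E n) (η : ℝ → ℝ) (hu : FloerTraj Hs Js v η)
    (a b A B : ℝ)
    (hA : Filter.Tendsto (fun s => RabAction (Hs s) (v s) (η s)) Filter.atBot (nhds A))
    (haA : a ≤ A)
    (hB : Filter.Tendsto (fun s => RabAction (Hs s) (v s) (η s)) Filter.atTop (nhds B))
    (hBb : B ≤ b) :
    (∀ s, |η s| ≤ (8/7) * (ctil * (max |a| |b| + 1) + ((b - a) / ε₀) * JN ^ ((3:ℝ)/2))) ∧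
    (∀ s, |RabAction (Hs s) (v s) (η s)| ≤ (1/7) * (8 * max |a| |b| + 1 + |b - a|)) ∧
    (∫⁻ s : ℝ, ENNReal.ofReal
        ((L2 (fun t => deriv (fun σ => v σ t) s)) ^ 2 + (deriv η s) ^ 2)
      ≤ ENNReal.ofReal ((1/7) * JN * (8 * |b - a| + max |a| |b| + 1))) := by
  have hκ : JN / ε₀ ≤ JN ^ ((3:ℝ)/2) / ε₀ := by
    gcongr
    exact Real.self_le_rpow_of_one_le hJN.1 (by norm_num)
  obtain ⟨hη, haction, henergy⟩ := uniform_bounds_along_Floer_trajectories_general hhom hJN hD hε₀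
    hctil.le hκ hsmall.le hu (fun s => hlin _ (hfam s) _ _ (hu.2.2.1 s)) hA haA hB hBb
  exact ⟨fun s => (hη s).trans_eq (by ring), haction, henergy⟩
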